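/- arXiv:2202.11562 — 2 statements merged into one kernel-verified Lean document; each statement's English description precedes it below -/
import Mathlib

section
/- Let S = [0,1]×[1,2], I = [0,1]×[0,1] and E = [1,2]×[0,1]. If Q₁ and Q₂ are closed axis-aligned unit squares whose interiors each intersect the interior of S ∪ I ∪ E and are each disjoint from the interior of S and from the interior of E, then the interiors of Q₁ and Q₂ intersect each other; consequently, at most one member of any family of pairwise interior-disjoint closed axis-aligned unit squares, each interior-disjoint from S and from E, can intersect the interior of S ∪ I ∪ E. -/
open Set

/-- The closed axis-aligned unit square with lower-left corner `a`. -/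
def unitSq (a : ℝ × ℝ) : Set (ℝ × ℝ) :=
  Set.Icc a.1 (a.1 + 1) ×ˢ Set.Icc a.2 (a.2 + 1)

/-- Two unit squares, given by their lower-left corners, overlap if their interiors intersect. -/
def Overlap (a b : ℝ × ℝ) : Prop :=
  (interior (unitSq a) ∩ interior (unitSq b)).Nonempty

/-! In the sup metric of `ℝ × ℝ` the unit squares are the closed balls of radius `1 / 2`, so two of
them overlap exactly when their corners are at distance less than `1`. A square whose interior meets
`S ∪ I ∪ E` already overlaps one of the three, hence overlaps `I` if it avoids `S` and `E`. Its
corner is then within `1` of `(0, 0)` in each coordinate, and avoiding `E` and `S` forces the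
coordinates to be nonpositive. Any two points of `(-1, 0] × (-1, 0]` are less than `1` apart. -/

theorem unitSq_eq_closedBall (a : ℝ × ℝ) :
    unitSq a = Metric.closedBall (a + (1 / 2, 1 / 2)) (1 / 2) := by
  rw [unitSq, Prod.add_def, ← closedBall_prod_same, Real.closedBall_eq_Icc, Real.closedBall_eq_Icc]
  ring_nf

theorem closure_interior_unitSq (a : ℝ × ℝ) : closure (interior (unitSq a)) = unitSq a := by
  rw [unitSq_eq_closedBall, interior_closedBall _ (by norm_num), closure_ball _ (by norm_num)]

theorem overlap_iff_dist_lt_one {a b : ℝ × ℝ} : Overlap a b ↔ dist a b < 1 := by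
  rw [Overlap, unitSq_eq_closedBall, unitSq_eq_closedBall, interior_closedBall _ (by norm_num),
    interior_closedBall _ (by norm_num), ← not_disjoint_iff_nonempty_inter,
    disjoint_ball_ball_iff (by norm_num) (by norm_num), dist_add_right, add_halves, not_le]

theorem overlap_iff_abs_sub_lt_one {a b : ℝ × ℝ} :
    Overlap a b ↔ |a.1 - b.1| < 1 ∧ |a.2 - b.2| < 1 := by
  rw [overlap_iff_dist_lt_one, Prod.dist_eq, max_lt_iff, Real.dist_eq, Real.dist_eq]

theorem overlap_iff_interior_inter_unitSq_nonempty {a b : ℝ × ℝ} :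
    Overlap a b ↔ (interior (unitSq a) ∩ unitSq b).Nonempty := by
  rw [Overlap, inter_comm, ← closure_inter_open_nonempty_iff isOpen_interior,
    closure_interior_unitSq, inter_comm]

theorem overlap_or_overlap_or_overlap_of_meets_interior_union {q s i e : ℝ × ℝ}
    (h : (interior (unitSq q) ∩ interior (unitSq s ∪ unitSq i ∪ unitSq e)).Nonempty) :
    Overlap q s ∨ Overlap q i ∨ Overlap q e := by
  have hunion := h.mono (inter_subset_inter_right _ interior_subset)
  simpa only [inter_union_distrib_left, union_nonempty,
    ← overlap_iff_interior_inter_unitSq_nonempty, or_assoc] using hunion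

section LinearOrderedAddCommGroup

variable {G : Type*} [AddCommGroup G] [LinearOrder G] [IsOrderedAddMonoid G] {x y a u : G}

theorem mem_Ioc_of_abs_sub_lt_of_not_abs_sub_add_lt (hx : |x - a| < u) (hx' : ¬ |x - (a + u)| < u) :
    x ∈ Ioc (a - u) a := by
  obtain ⟨hxa, hax⟩ := abs_sub_lt_iff.1 hx
  refine ⟨sub_lt_comm.1 hax, not_lt.1 fun ha_lt ↦ hx' (abs_sub_lt_iff.2 ⟨?_, ?_⟩)⟩
  · calc
      x - (a + u) = x - a - u := sub_add_eq_sub_sub x a u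
      _ < 0 := sub_neg.2 hxa
      _ < u := (sub_pos.2 ha_lt).trans hxa
  · calc
      a + u - x = a - x + u := add_sub_right_comm a u x
      _ < u := add_lt_of_neg_left u (sub_neg.2 ha_lt)

theorem abs_sub_lt_of_mem_Ioc (hx : x ∈ Ioc (a - u) a) (hy : y ∈ Ioc (a - u) a) : |x - y| < u :=
  abs_sub_lt_iff.2 ⟨(sub_le_sub_right hx.2 y).trans_lt (sub_lt_comm.1 hy.1),
    (sub_le_sub_right hy.2 x).trans_lt (sub_lt_comm.1 hx.1)⟩

end LinearOrderedAddCommGroup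

theorem mem_Ioc_prod_Ioc_of_overlap_of_not_overlap {q : ℝ × ℝ} {x y : ℝ} (hI : Overlap q (x, y))
    (hS : ¬ Overlap q (x, y + 1)) (hE : ¬ Overlap q (x + 1, y)) :
    q ∈ Ioc (x - 1) x ×ˢ Ioc (y - 1) y := by
  rw [overlap_iff_abs_sub_lt_one] at hI hS hE
  exact ⟨mem_Ioc_of_abs_sub_lt_of_not_abs_sub_add_lt hI.1 fun h ↦ hE ⟨h, hI.2⟩,
    mem_Ioc_of_abs_sub_lt_of_not_abs_sub_add_lt hI.2 fun h ↦ hS ⟨hI.1, h⟩⟩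

theorem overlap_of_mem_Ioc_prod_Ioc {p q : ℝ × ℝ} {x y : ℝ}
    (hp : p ∈ Ioc (x - 1) x ×ˢ Ioc (y - 1) y) (hq : q ∈ Ioc (x - 1) x ×ˢ Ioc (y - 1) y) :
    Overlap p q :=
  overlap_iff_abs_sub_lt_one.2
    ⟨abs_sub_lt_of_mem_Ioc hp.1 hq.1, abs_sub_lt_of_mem_Ioc hp.2 hq.2⟩

/-- Let `S = [0,1] × [1,2] = unitSq (0,1)`, `I = [0,1] × [0,1] = unitSq (0,0)` and
`E = [1,2] × [0,1] = unitSq (1,0)`.  If `Q₁` and `Q₂` are closed axis-aligned unit squares whose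
interiors each intersect the interior of `S ∪ I ∪ E` and are each disjoint from the interior of
`S` and from the interior of `E`, then the interiors of `Q₁` and `Q₂` intersect each other.
Consequently, at most one member of any family of pairwise interior-disjoint closed axis-aligned
unit squares, each interior-disjoint from `S` and from `E`, can intersect the interior of
`S ∪ I ∪ E`. -/
theorem at_most_one_square_meets_swept_region :
    (∀ q₁ q₂ : ℝ × ℝ,
      (interior (unitSq q₁) ∩
        interior (unitSq (0, 1) ∪ unitSq (0, 0) ∪ unitSq (1, 0))).Nonempty →
      (interior (unitSq q₂) ∩
        interior (unitSq (0, 1) ∪ unitSq (0, 0) ∪ unitSq (1, 0))).Nonempty →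
      ¬ Overlap q₁ (0, 1) → ¬ Overlap q₁ (1, 0) →
      ¬ Overlap q₂ (0, 1) → ¬ Overlap q₂ (1, 0) →
      (interior (unitSq q₁) ∩ interior (unitSq q₂)).Nonempty) ∧
    (∀ (ι : Type) (f : ι → ℝ × ℝ),
      (∀ i j : ι, i ≠ j → ¬ Overlap (f i) (f j)) →
      (∀ i : ι, ¬ Overlap (f i) (0, 1) ∧ ¬ Overlap (f i) (1, 0)) →
      {i : ι | (interior (unitSq (f i)) ∩
        interior (unitSq (0, 1) ∪ unitSq (0, 0) ∪ unitSq (1, 0))).Nonempty}.Subsingleton) := by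
  have corner_mem {q : ℝ × ℝ}
      (hq : (interior (unitSq q) ∩
        interior (unitSq (0, 1) ∪ unitSq (0, 0) ∪ unitSq (1, 0))).Nonempty)
      (hS : ¬ Overlap q (0, 1)) (hE : ¬ Overlap q (1, 0)) :
      q ∈ Ioc ((0 : ℝ) - 1) 0 ×ˢ Ioc ((0 : ℝ) - 1) 0 := by
    have hI : Overlap q (0, 0) :=
      ((overlap_or_overlap_or_overlap_of_meets_interior_union hq).resolve_left hS).resolve_right hE
    exact mem_Ioc_prod_Ioc_of_overlap_of_not_overlap hI
      (by rwa [zero_add]) (by rwa [zero_add])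
  refine ⟨fun q₁ q₂ h₁ h₂ hS₁ hE₁ hS₂ hE₂ ↦
    overlap_of_mem_Ioc_prod_Ioc (corner_mem h₁ hS₁ hE₁) (corner_mem h₂ hS₂ hE₂), ?_⟩
  intro ι f hdisjoint havoid i hi j hj
  by_contra hij
  exact hdisjoint i j hij <| overlap_of_mem_Ioc_prod_Ioc
    (corner_mem hi (havoid i).1 (havoid i).2) (corner_mem hj (havoid j).1 (havoid j).2)
end

section
/- In a consecutive transition with n moving labels, executed one after another in any given order, at most 7n overlaps occur during the transition. -/
open Set

/-- `a` is the lower-left corner of one of the four candidate positions of point `p`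
(the four closed unit squares having `p` as a corner). -/
def IsCandidate (p a : ℝ × ℝ) : Prop :=
  a = p ∨ a = (p.1 - 1, p.2) ∨ a = (p.1, p.2 - 1) ∨ a = (p.1 - 1, p.2 - 1)

/-- Two unit squares (given by lower-left corners) share an edge. -/
def SharesEdge (a b : ℝ × ℝ) : Prop :=
  (a.1 = b.1 ∧ (a.2 - b.2 = 1 ∨ b.2 - a.2 = 1)) ∨
  (a.2 = b.2 ∧ (a.1 - b.1 = 1 ∨ b.1 - a.1 = 1))

/-- A movement of the unit-square label of point `p` from candidate position `S` to candidate
position `E`.  If `S` and `E` share an edge (a non-diagonal movement) we set `I = E` and the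
label translates directly from `S` to `E`; if `S` and `E` are diagonally opposite (a diagonal
movement) the label translates through the specified intermediate candidate position `I`,
which shares an edge with both `S` and `E`. -/
structure Movement where
  p : ℝ × ℝ
  S : ℝ × ℝ
  I : ℝ × ℝ
  E : ℝ × ℝ
  candS : IsCandidate p S
  candI : IsCandidate p I
  candE : IsCandidate p E
  legs : (I = E ∧ SharesEdge S E) ∨
    (SharesEdge S I ∧ SharesEdge I E ∧ S.1 ≠ E.1 ∧ S.2 ≠ E.2)

/-- A movement is diagonal if the start and end positions are diagonally opposite
(equivalently, the intermediate position differs from the end position). -/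
def Movement.Diagonal (m : Movement) : Prop := m.I ≠ m.E

/-- Position (lower-left corner) of a moving label at time `t` after the start of its movement:
unit-speed axis-aligned translation, one unit of time per axis-aligned leg; the label rests at
its start position before the movement begins and at its end position after it is finished. -/
noncomputable def Movement.pos (m : Movement) (t : ℝ) : ℝ × ℝ :=
  if t ≤ 0 then m.S
  else if t ≤ 1 then m.S + t • (m.I - m.S)
  else if t ≤ 2 then m.I + (t - 1) • (m.E - m.I)
  else m.E

/-- Duration of a movement: one unit of time per axis-aligned translation. -/
noncomputable def Movement.dur (m : Movement) : ℝ := if m.I = m.E then 1 else 2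

/-- A transition instance: finitely many stationary labels (given by their lower-left corners)
and `n` moving labels, each with a prescribed movement, such that the labeling `L₁` formed by
the stationary labels together with the start positions of the moving labels is overlap-free,
and the labeling `L₂` formed by the stationary labels together with the end positions of the
moving labels is overlap-free. -/
structure TransitionInstance (k n : ℕ) where
  stat : Fin k → ℝ × ℝ
  mov : Fin n → Movement
  free_start : ∀ a b : Fin k ⊕ Fin n, a ≠ b →
    ¬ Overlap (Sum.elim stat (fun j => (mov j).S) a)
      (Sum.elim stat (fun j => (mov j).S) b)
  free_end : ∀ a b : Fin k ⊕ Fin n, a ≠ b →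
    ¬ Overlap (Sum.elim stat (fun j => (mov j).E) a)
      (Sum.elim stat (fun j => (mov j).E) b)

/-- A schedule `τ` of starting times is consecutive if the execution intervals of the movements
are pairwise non-overlapping, i.e. the movements are executed one after another in some order. -/
def Consecutive {k n : ℕ} (T : TransitionInstance k n) (τ : Fin n → ℝ) : Prop :=
  ∀ i j : Fin n, i ≠ j →
    τ i + (T.mov i).dur ≤ τ j ∨ τ j + (T.mov j).dur ≤ τ i

/-- Position (lower-left corner) of each label at global time `t`, when moving label `j`
starts its movement at time `τ j`; stationary labels never move. -/
noncomputable def traj {k n : ℕ} (T : TransitionInstance k n) (τ : Fin n → ℝ) (t : ℝ) :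
    Fin k ⊕ Fin n → ℝ × ℝ :=
  Sum.elim T.stat (fun j => (T.mov j).pos (t - τ j))

/-- The number of overlaps during the transition: the number of unordered pairs of distinct
labels whose interiors intersect at some moment. -/
noncomputable def overlapCount {k n : ℕ} (T : TransitionInstance k n) (τ : Fin n → ℝ) : ℕ :=
  Set.ncard {q : Sym2 (Fin k ⊕ Fin n) | ∃ a b : Fin k ⊕ Fin n,
    q = s(a, b) ∧ a ≠ b ∧ ∃ t : ℝ, Overlap (traj T τ t a) (traj T τ t b)}

/-!
A unit square swept along one leg of a movement only meets squares that meet the start or the end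
of that leg, so a moving label only meets squares that meet one of its positions `S`, `I` and `E`.
Let `l` move while another label `c` rests. If `c` is at its start position, then that position
meets `I` or `E` of `l`, because `L₁` is overlap-free; charge the overlap to `l`. If `c` is at its
end position, then that position meets `S` or `I` of `l`, because `L₂` is overlap-free; charge the
overlap to `c` if it meets `S` (the end position of `c` then meets the start position of `l`), and
to `l` otherwise. Each moving label is charged at most `2 + 4 + 1 = 7` times: at most two squares of
`L₁` meet `I`, as they all avoid the adjacent `S`; at most four squares of `L₁` meet `E`; and at
most one square of `L₂` meets `I` but neither `S` nor `E`.
-/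

section Interval

variable {R : Type*} [CommRing R] [LinearOrder R] [IsStrictOrderedRing R] {q r s x y z : R}

theorem abs_sub_lt_of_lt_iff_lt (hx : |q - x| < r) (hy : |q - y| < r) (h : x < q ↔ y < q) :
    |x - y| < r := by
  rw [abs_sub_lt_iff] at *
  rcases lt_or_ge x q with hxq | hxq
  · have hyq := h.1 hxq
    constructor <;> linarith
  · have hyq := not_lt.1 (mt h.2 hxq.not_gt)
    constructor <;> linarith

-- Both `x` and `y` lie on the side of `q` that faces away from `s`.
theorem abs_sub_lt_of_le_abs_sub (hs : |s - q| = r) (hx : |q - x| < r) (hy : |q - y| < r)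
    (hsx : r ≤ |s - x|) (hsy : r ≤ |s - y|) : |x - y| < r := by
  rw [abs_sub_lt_iff] at hx hy ⊢
  rcases eq_or_eq_neg_of_abs_eq hs with h | h
  · rw [abs_of_nonneg (by linarith)] at hsx hsy
    constructor <;> linarith
  · rw [abs_of_nonpos (by linarith)] at hsx hsy
    constructor <;> linarith

theorem abs_sub_lt_or_abs_sub_lt_of_mem_uIcc (hxy : |x - y| < 2 * r) (hz : z ∈ uIcc x y)
    (h : |z - q| < r) : |x - q| < r ∨ |y - q| < r := by
  wlog hle : x ≤ y generalizing x y
  · exact (this (abs_sub_comm x y ▸ hxy) (uIcc_comm x y ▸ hz) (le_of_not_ge hle)).symm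
  obtain ⟨hxz, hzy⟩ := uIcc_of_le hle ▸ hz
  simp only [abs_sub_lt_iff] at *
  rcases lt_or_ge (q - x) r with hq | hq
  · exact .inl ⟨by linarith, hq⟩
  · exact .inr ⟨by linarith, by linarith⟩

end Interval

section Overlap

variable {a b c p q s : ℝ × ℝ}

theorem overlap_iff : Overlap a b ↔ |a.1 - b.1| < 1 ∧ |a.2 - b.2| < 1 := by
  have hIoo (x y : ℝ) : (Ioo x (x + 1) ∩ Ioo y (y + 1)).Nonempty ↔ |x - y| < 1 := by
    rw [Ioo_inter_Ioo, nonempty_Ioo, abs_sub_lt_iff]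
    grind
  simp only [Overlap, unitSq, interior_prod_eq, interior_Icc, prod_inter_prod, prod_nonempty_iff,
    hIoo]

theorem Overlap.symm (h : Overlap a b) : Overlap b a := by
  rwa [Overlap, inter_comm]

theorem sharesEdge_iff :
    SharesEdge a b ↔ a.1 = b.1 ∧ |a.2 - b.2| = 1 ∨ a.2 = b.2 ∧ |a.1 - b.1| = 1 := by
  simp only [SharesEdge, abs_eq zero_le_one, ← neg_sub b.1 a.1, ← neg_sub b.2 a.2, neg_inj]

theorem Overlap.left_or_right_of_mem_segment
    (hab : a.1 = b.1 ∧ |a.2 - b.2| < 2 ∨ a.2 = b.2 ∧ |a.1 - b.1| < 2) (hp : p ∈ segment ℝ a b)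
    (h : Overlap p c) : Overlap a c ∨ Overlap b c := by
  obtain ⟨hp₁, hp₂⟩ := Prod.segment_subset a b hp
  rw [segment_eq_uIcc] at hp₁ hp₂
  simp only [overlap_iff] at h ⊢
  rcases hab with ⟨hfst, hsnd⟩ | ⟨hsnd, hfst⟩
  · have hpa : p.1 = a.1 := by simpa [hfst] using hp₁
    rw [← hfst, ← hpa, ← and_or_left]
    exact ⟨h.1, abs_sub_lt_or_abs_sub_lt_of_mem_uIcc (by simpa using hsnd) hp₂ h.2⟩
  · have hpa : p.2 = a.2 := by simpa [hsnd] using hp₂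
    rw [← hsnd, ← hpa, ← or_and_right]
    exact ⟨abs_sub_lt_or_abs_sub_lt_of_mem_uIcc (by simpa using hfst) hp₁ h.1, h.2⟩

theorem abs_fst_sub_fst_lt_one (hsnd : s.2 = q.2) (hfst : |s.1 - q.1| = 1)
    (ha : Overlap q a ∧ ¬Overlap s a) (hb : Overlap q b ∧ ¬Overlap s b) : |a.1 - b.1| < 1 := by
  simp only [overlap_iff, hsnd, not_and'] at ha hb
  exact abs_sub_lt_of_le_abs_sub hfst ha.1.1 hb.1.1 (not_lt.1 (ha.2 ha.1.2))
    (not_lt.1 (hb.2 hb.1.2))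

theorem abs_snd_sub_snd_lt_one (hfst : s.1 = q.1) (hsnd : |s.2 - q.2| = 1)
    (ha : Overlap q a ∧ ¬Overlap s a) (hb : Overlap q b ∧ ¬Overlap s b) : |a.2 - b.2| < 1 := by
  simp only [overlap_iff, hfst, not_and] at ha hb
  exact abs_sub_lt_of_le_abs_sub hsnd ha.1.2 hb.1.2 (not_lt.1 (ha.2 ha.1.1))
    (not_lt.1 (hb.2 hb.1.1))

theorem overlap_of_sharesEdge_of_sharesEdge {e : ℝ × ℝ} (hs : SharesEdge s q)
    (he : SharesEdge q e) (hfst : s.1 ≠ e.1) (hsnd : s.2 ≠ e.2)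
    (ha : Overlap q a ∧ ¬Overlap s a ∧ ¬Overlap e a)
    (hb : Overlap q b ∧ ¬Overlap s b ∧ ¬Overlap e b) : Overlap a b := by
  rw [sharesEdge_iff] at hs he
  rw [abs_sub_comm q.1, abs_sub_comm q.2, eq_comm (a := q.1), eq_comm (a := q.2)] at he
  have has : Overlap q a ∧ ¬Overlap s a := ⟨ha.1, ha.2.1⟩
  have hae : Overlap q a ∧ ¬Overlap e a := ⟨ha.1, ha.2.2⟩
  have hbs : Overlap q b ∧ ¬Overlap s b := ⟨hb.1, hb.2.1⟩
  have hbe : Overlap q b ∧ ¬Overlap e b := ⟨hb.1, hb.2.2⟩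
  rw [overlap_iff]
  rcases hs with ⟨hs₁, hs₂⟩ | ⟨hs₂, hs₁⟩ <;> rcases he with ⟨he₁, he₂⟩ | ⟨he₂, he₁⟩
  · exact absurd (hs₁.trans he₁.symm) hfst
  · exact ⟨abs_fst_sub_fst_lt_one he₂ he₁ hae hbe, abs_snd_sub_snd_lt_one hs₁ hs₂ has hbs⟩
  · exact ⟨abs_fst_sub_fst_lt_one hs₂ hs₁ has hbs, abs_snd_sub_snd_lt_one he₁ he₂ hae hbe⟩
  · exact absurd (hs₂.trans he₂.symm) hsnd

end Overlap

section Packing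

variable {ι : Type*} {f : ι → ℝ × ℝ}

theorem encard_le_card_of_overlap_of_eq {κ : Type*}
    (hf : Pairwise fun i j => ¬Overlap (f i) (f j)) {t : Set ι} (key : ι → κ)
    (h : ∀ i ∈ t, ∀ j ∈ t, key i = key j → Overlap (f i) (f j)) : t.encard ≤ ENat.card κ := by
  rw [← encard_univ]
  refine encard_le_encard_of_injOn (mapsTo_univ key t) fun i hi j hj hij => ?_
  by_contra hne
  exact hf hne (h i hi j hj hij)

theorem encard_overlap_le_four (hf : Pairwise fun i j => ¬Overlap (f i) (f j)) (q : ℝ × ℝ) :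
    {i | Overlap q (f i)}.encard ≤ 4 := by
  have hquadrant := encard_le_card_of_overlap_of_eq hf (t := {i | Overlap q (f i)})
    (fun i => ((f i).1 < q.1, (f i).2 < q.2)) fun i hi j hj hij => by
      obtain ⟨hfst, hsnd⟩ := Prod.mk.inj hij
      rw [mem_ofPred_eq, overlap_iff] at hi hj
      exact overlap_iff.2 ⟨abs_sub_lt_of_lt_iff_lt hi.1 hj.1 hfst.to_iff,
        abs_sub_lt_of_lt_iff_lt hi.2 hj.2 hsnd.to_iff⟩
  simpa [ENat.card_eq_coe_fintype_card] using hquadrant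

theorem encard_overlap_sdiff_le_two (hf : Pairwise fun i j => ¬Overlap (f i) (f j))
    {s q : ℝ × ℝ} (h : SharesEdge s q) :
    {i | Overlap q (f i) ∧ ¬Overlap s (f i)}.encard ≤ 2 := by
  suffices ∃ key : ι → Prop, ∀ i ∈ {i | Overlap q (f i) ∧ ¬Overlap s (f i)},
      ∀ j ∈ {i | Overlap q (f i) ∧ ¬Overlap s (f i)}, key i = key j → Overlap (f i) (f j) by
    obtain ⟨key, hkey⟩ := this
    simpa [ENat.card_eq_coe_fintype_card] using encard_le_card_of_overlap_of_eq hf key hkey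
  rcases sharesEdge_iff.1 h with ⟨hfst, hsnd⟩ | ⟨hsnd, hfst⟩
  · refine ⟨fun i => (f i).1 < q.1, fun i hi j hj hij => overlap_iff.2 ⟨?_, ?_⟩⟩
    · exact abs_sub_lt_of_lt_iff_lt (overlap_iff.1 hi.1).1 (overlap_iff.1 hj.1).1 hij.to_iff
    · exact abs_snd_sub_snd_lt_one hfst hsnd hi hj
  · refine ⟨fun i => (f i).2 < q.2, fun i hi j hj hij => overlap_iff.2 ⟨?_, ?_⟩⟩
    · exact abs_fst_sub_fst_lt_one hsnd hfst hi hj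
    · exact abs_sub_lt_of_lt_iff_lt (overlap_iff.1 hi.1).2 (overlap_iff.1 hj.1).2 hij.to_iff

theorem encard_overlap_sdiff_sdiff_le_one (hf : Pairwise fun i j => ¬Overlap (f i) (f j))
    {s q e : ℝ × ℝ} (hs : SharesEdge s q) (he : SharesEdge q e) (hfst : s.1 ≠ e.1)
    (hsnd : s.2 ≠ e.2) :
    {i | Overlap q (f i) ∧ ¬Overlap s (f i) ∧ ¬Overlap e (f i)}.encard ≤ 1 := by
  refine encard_le_one_iff.2 fun i j hi hj => ?_
  by_contra hne
  exact hf hne (overlap_of_sharesEdge_of_sharesEdge hs he hfst hsnd hi hj)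

end Packing

namespace Movement

variable (m : Movement) {t : ℝ}

theorem sharesEdge_S_I : SharesEdge m.S m.I := by
  rcases m.legs with ⟨hIE, hSE⟩ | hdiag
  · exact hIE ▸ hSE
  · exact hdiag.1

theorem pos_of_nonpos (ht : t ≤ 0) : m.pos t = m.S :=
  if_pos ht

theorem pos_of_dur_le (ht : m.dur ≤ t) : m.pos t = m.E := by
  rw [dur] at ht
  split_ifs at ht with hIE
  · rcases ht.eq_or_lt with rfl | ht
    · simp [pos, hIE]
    · simp [pos, hIE, ht.not_ge, (one_pos.trans ht).not_ge]
  · rcases ht.eq_or_lt with rfl | ht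
    · norm_num [pos]
    · simp [pos, ht.not_ge, (one_lt_two.trans ht).not_ge, (two_pos.trans ht).not_ge]

theorem pos_mem_segment (t : ℝ) : m.pos t ∈ segment ℝ m.S m.I ∪ segment ℝ m.I m.E := by
  unfold pos
  split_ifs with h₀ h₁ h₂
  · exact .inl (left_mem_segment ℝ _ _)
  · rw [segment_eq_image']
    exact .inl ⟨t, ⟨by linarith, h₁⟩, rfl⟩
  · rw [segment_eq_image' ℝ m.I]
    exact .inr ⟨t - 1, ⟨by linarith, by linarith⟩, rfl⟩
  · exact .inr (right_mem_segment ℝ _ _)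

theorem overlap_of_overlap_pos {c : ℝ × ℝ} (h : Overlap (m.pos t) c) :
    Overlap m.S c ∨ Overlap m.I c ∨ Overlap m.E c := by
  have hleg {a b : ℝ × ℝ} (hab : SharesEdge a b) (hp : m.pos t ∈ segment ℝ a b) :
      Overlap a c ∨ Overlap b c :=
    h.left_or_right_of_mem_segment ((sharesEdge_iff.1 hab).imp
      (And.imp_right fun hd => hd.trans_lt one_lt_two)
      (And.imp_right fun hd => hd.trans_lt one_lt_two)) hp
  rcases m.pos_mem_segment t with hp | hp
  · exact or_assoc.1 (.inl (hleg m.sharesEdge_S_I hp))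
  · rcases m.legs with ⟨hIE, -⟩ | ⟨-, hedge, -⟩
    · rw [hIE, segment_same, mem_singleton_iff] at hp
      exact .inr (.inr (hp ▸ h))
    · exact .inr (hleg hedge hp)

theorem encard_overlap_I_sdiff_le_one {ι : Type*} {f : ι → ℝ × ℝ}
    (hf : Pairwise fun i j => ¬Overlap (f i) (f j)) :
    {i | Overlap m.I (f i) ∧ ¬Overlap m.S (f i) ∧ ¬Overlap m.E (f i)}.encard ≤ 1 := by
  rcases m.legs with ⟨hIE, -⟩ | ⟨hSI, hIE, hfst, hsnd⟩
  · exact encard_le_one_iff.2 fun i _ hi _ => absurd (hIE ▸ hi.1) hi.2.2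
  · exact encard_overlap_sdiff_sdiff_le_one hf hSI hIE hfst hsnd

end Movement

namespace TransitionInstance

variable {k n : ℕ} (T : TransitionInstance k n)

/-- The labeling `L₁`: stationary labels together with the start positions of moving labels. -/
def startPos : Fin k ⊕ Fin n → ℝ × ℝ :=
  Sum.elim T.stat fun j => (T.mov j).S

/-- The labeling `L₂`: stationary labels together with the end positions of moving labels. -/
def endPos : Fin k ⊕ Fin n → ℝ × ℝ :=
  Sum.elim T.stat fun j => (T.mov j).E

/-- The labels whose overlap with the moving label `l` is charged to `l`. The last clause leaves out
labels whose end position meets the start position of `l`: their own movement is charged, through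
the second clause. -/
def charged (l : Fin n) : Set (Fin k ⊕ Fin n) :=
  {c | c ≠ .inr l ∧ (Overlap (T.mov l).I (T.startPos c) ∨ Overlap (T.mov l).E (T.startPos c) ∨
    (Overlap (T.mov l).I (T.endPos c) ∧ ¬Overlap (T.mov l).S (T.endPos c)))}

variable {T} {l i j : Fin n} {c : Fin k ⊕ Fin n} {t : ℝ}

theorem not_overlap_S_startPos (hc : c ≠ .inr l) : ¬Overlap (T.mov l).S (T.startPos c) :=
  T.free_start (.inr l) c hc.symm

theorem not_overlap_E_endPos (hc : c ≠ .inr l) : ¬Overlap (T.mov l).E (T.endPos c) :=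
  T.free_end (.inr l) c hc.symm

theorem encard_charged_le_seven (T : TransitionInstance k n) (l : Fin n) :
    (T.charged l).encard ≤ 7 := by
  let m := T.mov l
  let A : Set (Fin k ⊕ Fin n) := {c | Overlap m.I (T.startPos c) ∧ ¬Overlap m.S (T.startPos c)}
  let B : Set (Fin k ⊕ Fin n) := {c | Overlap m.E (T.startPos c)}
  let C : Set (Fin k ⊕ Fin n) :=
    {c | Overlap m.I (T.endPos c) ∧ ¬Overlap m.S (T.endPos c) ∧ ¬Overlap m.E (T.endPos c)}
  have hsub : T.charged l ⊆ A ∪ (B ∪ C) := by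
    rintro c ⟨hc, hI | hE | ⟨hI, hS⟩⟩
    · exact .inl ⟨hI, not_overlap_S_startPos hc⟩
    · exact .inr (.inl hE)
    · exact .inr (.inr ⟨hI, hS, not_overlap_E_endPos hc⟩)
  calc (T.charged l).encard ≤ (A ∪ (B ∪ C)).encard := encard_le_encard hsub
    _ ≤ A.encard + (B.encard + C.encard) :=
      (encard_union_le _ _).trans (by gcongr; exact encard_union_le _ _)
    _ ≤ 2 + (4 + 1) := by
      gcongr
      · exact encard_overlap_sdiff_le_two T.free_start m.sharesEdge_S_I
      · exact encard_overlap_le_four T.free_start m.E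
      · exact m.encard_overlap_I_sdiff_le_one T.free_end
    _ = 7 := by norm_num

theorem mem_charged_of_overlap_startPos (hc : c ≠ .inr l)
    (h : Overlap ((T.mov l).pos t) (T.startPos c)) : c ∈ T.charged l := by
  rcases (T.mov l).overlap_of_overlap_pos h with hS | hI | hE
  · exact absurd hS (not_overlap_S_startPos hc)
  · exact ⟨hc, .inl hI⟩
  · exact ⟨hc, .inr (.inl hE)⟩

theorem overlap_S_or_mem_charged_of_overlap_endPos (hc : c ≠ .inr l)
    (h : Overlap ((T.mov l).pos t) (T.endPos c)) :
    Overlap (T.mov l).S (T.endPos c) ∨ c ∈ T.charged l := by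
  refine or_iff_not_imp_left.2 fun hS => ?_
  rcases (T.mov l).overlap_of_overlap_pos h with hS' | hI | hE
  · exact absurd hS' hS
  · exact ⟨hc, .inr (.inr ⟨hI, hS⟩)⟩
  · exact absurd hE (not_overlap_E_endPos hc)

theorem mem_charged_or_mem_charged {τ : Fin n → ℝ} (hij : i ≠ j)
    (hle : τ i + (T.mov i).dur ≤ τ j)
    (h : Overlap ((T.mov i).pos (t - τ i)) ((T.mov j).pos (t - τ j))) :
    .inr j ∈ T.charged i ∨ .inr i ∈ T.charged j := by
  have hji : (.inr j : Fin k ⊕ Fin n) ≠ .inr i := Sum.inr_injective.ne hij.symm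
  rcases le_total t (τ j) with ht | ht
  · rw [(T.mov j).pos_of_nonpos (sub_nonpos.2 ht)] at h
    exact .inl (mem_charged_of_overlap_startPos hji h)
  · rw [(T.mov i).pos_of_dur_le (by linarith)] at h
    rcases overlap_S_or_mem_charged_of_overlap_endPos (c := .inr i) hji.symm h.symm with hS | hmem
    · exact .inl ⟨hji, .inr (.inl hS.symm)⟩
    · exact .inr hmem

theorem exists_mem_charged_of_overlap {τ : Fin n → ℝ} (hcons : Consecutive T τ)
    {a b : Fin k ⊕ Fin n} (hab : a ≠ b) (h : Overlap (traj T τ t a) (traj T τ t b)) :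
    ∃ l, ∃ c ∈ T.charged l, s(.inr l, c) = s(a, b) := by
  rcases a with a | i <;> rcases b with b | j <;>
    simp only [traj, Sum.elim_inl, Sum.elim_inr] at h
  · have hfree : ¬Overlap (T.stat a) (T.stat b) := T.free_start (.inl a) (.inl b) hab
    exact absurd h hfree
  · exact ⟨j, .inl a, mem_charged_of_overlap_startPos hab h.symm, Sym2.eq_swap⟩
  · exact ⟨i, .inl b, mem_charged_of_overlap_startPos hab.symm h, rfl⟩
  · have hij : i ≠ j := ne_of_apply_ne Sum.inr hab
    have hcharged : .inr j ∈ T.charged i ∨ .inr i ∈ T.charged j := by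
      rcases hcons i j hij with hle | hle
      · exact mem_charged_or_mem_charged hij hle h
      · exact (mem_charged_or_mem_charged hij.symm hle h.symm).symm
    rcases hcharged with hj | hi
    · exact ⟨i, .inr j, hj, rfl⟩
    · exact ⟨j, .inr i, hi, Sym2.eq_swap⟩

end TransitionInstance

/-- In a consecutive transition with `n` moving labels, executed one after another in any given
order, at most `7 n` overlaps occur during the transition. -/
theorem consecutive_overlaps_le {k n : ℕ} (T : TransitionInstance k n) (τ : Fin n → ℝ)
    (hcons : Consecutive T τ) :
    overlapCount T τ ≤ 7 * n := by
  let pairs (l : Fin n) : Set (Sym2 (Fin k ⊕ Fin n)) := (fun c => s(.inr l, c)) '' T.charged l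
  have hpairs (l : Fin n) : (pairs l).ncard ≤ 7 :=
    (ncard_image_le (toFinite _)).trans
      (ENat.toNat_le_of_le_natCast (T.encard_charged_le_seven l))
  calc overlapCount T τ ≤ (⋃ l, pairs l).ncard := by
        refine ncard_le_ncard ?_ (toFinite _)
        rintro _ ⟨a, b, rfl, hab, t, h⟩
        exact mem_iUnion.2 (TransitionInstance.exists_mem_charged_of_overlap hcons hab h)
    _ ≤ ∑ l, (pairs l).ncard := ncard_iUnion_le_of_fintype pairs
    _ ≤ ∑ _l : Fin n, 7 := Finset.sum_le_sum fun l _ => hpairs l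
    _ = 7 * n := by simp [mul_comm]
end
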